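/- arXiv:2202.06659 — 2 statements merged into one kernel-verified Lean document; each statement's English description precedes it below -/
import Mathlib

section
/- Let (D_n)_{n∈ℕ} and D_∞ be nonempty compact convex subsets of ℝ³ such that 0 ∈ D_n for every n, 0 lies in the relative interior of D_∞ (its interior within its affine span), the Hausdorff distance d_H(D_n, D_∞) tends to 0, and for every n the dimension of the linear span of D_∞ is at most the dimension of the linear span of D_n. Then there exists a sequence (φ_n) of orthogonal linear maps of ℝ³ converging to the identity (in operator norm) such that φ_n⁻¹(span(D_∞)) ⊆ span(D_n) for every n. -/
open Filter Topology


/-- An orthonormal basis of `ℝ³` extending the standard orthonormal basis of a subspace. -/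
lemma aux_extend (U : Submodule ℝ (EuclideanSpace ℝ (Fin 3))) :
    ∃ b : OrthonormalBasis (Fin 3) ℝ (EuclideanSpace ℝ (Fin 3)),
      ∀ (i : Fin 3) (h : (i : ℕ) < Module.finrank ℝ U),
        b i = (stdOrthonormalBasis ℝ U ⟨i, h⟩ : EuclideanSpace ℝ (Fin 3)) := by
  classical
  let v : Fin 3 → EuclideanSpace ℝ (Fin 3) := fun i =>
    if h : (i : ℕ) < Module.finrank ℝ U then
      (stdOrthonormalBasis ℝ U ⟨i, h⟩ : EuclideanSpace ℝ (Fin 3)) else 0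
  let s : Set (Fin 3) := {i | (i : ℕ) < Module.finrank ℝ U}
  have hv : Orthonormal ℝ (s.domRestrict v) := by
    have h1 := (stdOrthonormalBasis ℝ U).orthonormal
    have h2 : Orthonormal ℝ (fun j => (stdOrthonormalBasis ℝ U j : EuclideanSpace ℝ (Fin 3))) :=
      h1.comp_linearIsometry U.subtypeₗᵢ
    have h3 := h2.comp (fun i : s => (⟨(i : Fin 3), i.2⟩ : Fin (Module.finrank ℝ U)))
      (fun a b hab => by
        apply Subtype.ext
        apply Fin.ext
        simpa using hab)
    convert h3 using 1
    funext i
    have hi : ((i : Fin 3) : ℕ) < Module.finrank ℝ U := i.2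
    simp [v, hi]
  obtain ⟨b, hb⟩ := hv.exists_orthonormalBasis_extension_of_card_eq (by simp)
  refine ⟨b, fun i h => ?_⟩
  rw [hb i h]
  simp [v, h]

/-- Gram–Schmidt is continuous at an orthonormal family. -/
lemma aux_gs (f : ℕ → Fin 3 → EuclideanSpace ℝ (Fin 3))
    (b : OrthonormalBasis (Fin 3) ℝ (EuclideanSpace ℝ (Fin 3)))
    (hf : ∀ i, Tendsto (fun n => f n i) atTop (𝓝 (b i))) (i : Fin 3) :
    Tendsto (fun n => InnerProductSpace.gramSchmidt ℝ (f n) i) atTop (𝓝 (b i)) := by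
  induction i using WellFoundedLT.induction with
  | ind i ih =>
    have hd : ∀ n, InnerProductSpace.gramSchmidt ℝ (f n) i = f n i - ∑ j ∈ Finset.Iio i,
        (inner ℝ (InnerProductSpace.gramSchmidt ℝ (f n) j) (f n i) /
          ((‖InnerProductSpace.gramSchmidt ℝ (f n) j‖ ^ 2 : ℝ) : ℝ)) •
          InnerProductSpace.gramSchmidt ℝ (f n) j := by
      intro n
      exact eq_sub_of_add_eq (InnerProductSpace.gramSchmidt_def'' ℝ (f n) i).symm
    rw [tendsto_congr hd]
    have h1 : Tendsto (fun n => ∑ j ∈ Finset.Iio i,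
        (inner ℝ (InnerProductSpace.gramSchmidt ℝ (f n) j) (f n i) /
          ((‖InnerProductSpace.gramSchmidt ℝ (f n) j‖ ^ 2 : ℝ) : ℝ)) •
          InnerProductSpace.gramSchmidt ℝ (f n) j) atTop
        (𝓝 (∑ j ∈ Finset.Iio i, (inner ℝ (b j) (b i) / ((‖b j‖ ^ 2 : ℝ) : ℝ)) • b j)) := by
      refine tendsto_finsetSum _ fun j hj => ?_
      have hj' := ih j (Finset.mem_Iio.1 hj)
      refine Tendsto.smul (Tendsto.div (hj'.inner (hf i)) (hj'.norm.pow 2) ?_) hj'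
      simp
    have h0 : (∑ j ∈ Finset.Iio i, (inner ℝ (b j) (b i) / ((‖b j‖ ^ 2 : ℝ) : ℝ)) • b j) = 0 := by
      refine Finset.sum_eq_zero fun j hj => ?_
      have : inner ℝ (b j) (b i) = 0 := b.orthonormal.2 (Finset.mem_Iio.1 hj).ne
      simp [this]
    rw [h0] at h1
    simpa using (hf i).sub h1

lemma aux_gsn (f : ℕ → Fin 3 → EuclideanSpace ℝ (Fin 3))
    (b : OrthonormalBasis (Fin 3) ℝ (EuclideanSpace ℝ (Fin 3)))
    (hf : ∀ i, Tendsto (fun n => f n i) atTop (𝓝 (b i))) (i : Fin 3) :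
    Tendsto (fun n => InnerProductSpace.gramSchmidtNormed ℝ (f n) i) atTop (𝓝 (b i)) := by
  have h := aux_gs f b hf i
  have h2 := (h.norm.inv₀ (by simp)).smul h
  simpa [InnerProductSpace.gramSchmidtNormed] using h2

lemma aux_norm (c b : OrthonormalBasis (Fin 3) ℝ (EuclideanSpace ℝ (Fin 3))) :
    ‖(c.equiv b (Equiv.refl _)).toLinearIsometry.toContinuousLinearMap -
        ContinuousLinearMap.id ℝ (EuclideanSpace ℝ (Fin 3))‖ ≤ ∑ i, ‖c i - b i‖ := by
  refine ContinuousLinearMap.opNorm_le_bound _ (Finset.sum_nonneg fun _ _ => norm_nonneg _) ?_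
  intro x
  have h1 : (c.equiv b (Equiv.refl _)) x - x = ∑ i, inner ℝ (c i - b i) x • b i := by
    conv_lhs => rw [OrthonormalBasis.equiv_apply]
    conv_lhs => rhs; rw [← b.sum_repr' x]
    rw [← Finset.sum_sub_distrib]
    refine Finset.sum_congr rfl fun i _ => ?_
    rw [inner_sub_left, sub_smul, OrthonormalBasis.repr_apply_apply]
    rfl
  change ‖(c.equiv b (Equiv.refl _)) x - x‖ ≤ _
  rw [h1, Finset.sum_mul]
  refine (norm_sum_le _ _).trans (Finset.sum_le_sum fun i _ => ?_)
  rw [norm_smul]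
  simpa using norm_inner_le_norm (𝕜 := ℝ) (c i - b i) x

/-- Let `(D_n)` and `D_∞` be nonempty compact convex subsets of `ℝ³` with
`0 ∈ D_n` for every `n`, `0` in the relative interior of `D_∞`, `d_H(D_n, D_∞) → 0`, and
`dim span(D_∞) ≤ dim span(D_n)` for every `n`. Then there exist orthogonal linear maps
`φ_n` of `ℝ³` converging to the identity in operator norm with
`φ_n⁻¹(span D_∞) ⊆ span (D_n)` for every `n`. -/
theorem stmt_0 (D : ℕ → Set (EuclideanSpace ℝ (Fin 3)))
    (D_inf : Set (EuclideanSpace ℝ (Fin 3)))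
    (hDc : ∀ n, IsCompact (D n)) (hDconv : ∀ n, Convex ℝ (D n)) (hDne : ∀ n, (D n).Nonempty)
    (hIc : IsCompact D_inf) (hIconv : Convex ℝ D_inf) (hIne : D_inf.Nonempty)
    (h0 : ∀ n, (0 : EuclideanSpace ℝ (Fin 3)) ∈ D n)
    (h0I : (0 : EuclideanSpace ℝ (Fin 3)) ∈ intrinsicInterior ℝ D_inf)
    (hH : Tendsto (fun n => Metric.hausdorffDist (D n) D_inf) atTop (𝓝 0))
    (hdim : ∀ n, Module.finrank ℝ (Submodule.span ℝ D_inf) ≤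
      Module.finrank ℝ (Submodule.span ℝ (D n))) :
    ∃ φ : ℕ → (EuclideanSpace ℝ (Fin 3) ≃ₗᵢ[ℝ] EuclideanSpace ℝ (Fin 3)),
      Tendsto (fun n => ‖(φ n).toLinearIsometry.toContinuousLinearMap -
        ContinuousLinearMap.id ℝ (EuclideanSpace ℝ (Fin 3))‖) atTop (𝓝 0) ∧
      ∀ n, ∀ x ∈ Submodule.span ℝ D_inf, (φ n).symm x ∈ Submodule.span ℝ (D n) := by
  classical
  set V := Submodule.span ℝ D_inf with hV
  obtain ⟨b, hb⟩ := aux_extend V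
  let W : ℕ → Submodule ℝ (EuclideanSpace ℝ (Fin 3)) := fun n => Submodule.span ℝ (D n)
  -- projections converge on `V`
  have hproj : ∀ x ∈ V, Tendsto (fun n => (W n).starProjection x) atTop (𝓝 x) := by
    intro x hx
    induction hx using Submodule.span_induction with
    | mem x hx =>
      rw [tendsto_iff_norm_sub_tendsto_zero]
      refine squeeze_zero (fun _ => norm_nonneg _) (fun n => ?_) hH
      obtain ⟨y, hy, hxy⟩ := (hDc n).exists_infDist_eq_dist (hDne n) x
      have h1 : Metric.infDist x (D n) ≤ Metric.hausdorffDist D_inf (D n) :=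
        Metric.infDist_le_hausdorffDist_of_mem hx
          (Metric.hausdorffEDist_ne_top_of_nonempty_of_bounded hIne (hDne n)
            hIc.isBounded (hDc n).isBounded)
      rw [Metric.hausdorffDist_comm, hxy, dist_eq_norm] at h1
      refine le_trans ?_ h1
      rw [norm_sub_rev, Submodule.starProjection_minimal]
      exact ciInf_le ⟨0, by rintro _ ⟨z, rfl⟩; exact norm_nonneg _⟩
        (⟨y, Submodule.subset_span hy⟩ : W n)
    | zero => simp
    | add x y _ _ hx hy => simpa using hx.add hy
    | smul a x _ hx => simpa using hx.const_smul a
  let f : ℕ → Fin 3 → EuclideanSpace ℝ (Fin 3) := fun n i =>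
    if (i : ℕ) < Module.finrank ℝ V then (W n).starProjection (b i) else b i
  have hf : ∀ i, Tendsto (fun n => f n i) atTop (𝓝 (b i)) := by
    intro i
    by_cases hi : (i : ℕ) < Module.finrank ℝ V
    · simp only [f, hi, if_true]
      apply hproj
      rw [hb i hi]
      exact Subtype.property _
    · simp only [f, hi, if_false]
      exact tendsto_const_nhds
  have hg := aux_gsn f b hf
  -- choice of orthonormal bases adapted to `W n`
  have hc : ∀ n, ∃ c : OrthonormalBasis (Fin 3) ℝ (EuclideanSpace ℝ (Fin 3)),
      (∀ i : Fin 3, (i : ℕ) < Module.finrank ℝ V → c i ∈ W n) ∧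
      ((∀ i, InnerProductSpace.gramSchmidtNormed ℝ (f n) i ≠ 0) →
        ∀ i, c i = InnerProductSpace.gramSchmidtNormed ℝ (f n) i) := by
    intro n
    by_cases hn : ∀ i, InnerProductSpace.gramSchmidtNormed ℝ (f n) i ≠ 0
    · have hfr : Module.finrank ℝ (EuclideanSpace ℝ (Fin 3)) = Fintype.card (Fin 3) := by simp
      have hcc : ∀ i, InnerProductSpace.gramSchmidtOrthonormalBasis hfr (f n) i =
          InnerProductSpace.gramSchmidtNormed ℝ (f n) i := fun i =>
        InnerProductSpace.gramSchmidtOrthonormalBasis_apply hfr (hn i)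
      refine ⟨InnerProductSpace.gramSchmidtOrthonormalBasis hfr (f n), fun i hi => ?_,
        fun _ => hcc⟩
      rw [hcc, InnerProductSpace.gramSchmidtNormed]
      refine Submodule.smul_mem _ _ ?_
      have h1 := InnerProductSpace.gramSchmidt_mem_span ℝ (f n) (le_refl i)
      refine (Submodule.span_le.2 ?_) h1
      rintro _ ⟨j, hj, rfl⟩
      have hj' : (j : ℕ) < Module.finrank ℝ V := lt_of_le_of_lt (Fin.le_def.1 hj) hi
      simp only [f, hj', if_true]
      exact Submodule.starProjection_apply_mem _ _
    · obtain ⟨c, hc⟩ := aux_extend (W n)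
      refine ⟨c, fun i hi => ?_, fun h => absurd h hn⟩
      rw [hc i (lt_of_lt_of_le hi (hdim n))]
      exact Subtype.property _
  choose c hcW hcg using hc
  refine ⟨fun n => (c n).equiv b (Equiv.refl _), ?_, ?_⟩
  · refine squeeze_zero (fun _ => norm_nonneg _) (fun n => aux_norm (c n) b) ?_
    have h0 : (0 : ℝ) = ∑ _i : Fin 3, (0 : ℝ) := by simp
    rw [h0]
    refine tendsto_finsetSum _ fun i _ => ?_
    rw [← tendsto_iff_norm_sub_tendsto_zero]
    refine (hg i).congr' ?_
    have hev : ∀ᶠ n in atTop, ∀ i, InnerProductSpace.gramSchmidtNormed ℝ (f n) i ≠ 0 := by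
      rw [eventually_all]
      intro i
      exact (hg i).eventually_ne (b.orthonormal.ne_zero i)
    filter_upwards [hev] with n hn
    exact (hcg n hn i).symm
  · intro n x hx
    have hk : Module.finrank ℝ V ≤ 3 := by simpa using Submodule.finrank_le V
    have h1 := (stdOrthonormalBasis ℝ V).sum_repr ⟨x, hx⟩
    have h2 : _ = x := congrArg (Subtype.val) h1
    generalize (stdOrthonormalBasis ℝ V).repr ⟨x, hx⟩ = r at h2
    rw [← h2]
    simp only [Submodule.coe_sum, Submodule.coe_smul, map_sum, map_smul]
    refine Submodule.sum_mem _ fun j _ => Submodule.smul_mem _ _ ?_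
    have hj : (j : ℕ) < Module.finrank ℝ V := j.2
    have h3 := hb ⟨j, lt_of_lt_of_le hj hk⟩ hj
    have h4 : (⟨((⟨j, lt_of_lt_of_le hj hk⟩ : Fin 3) : ℕ), hj⟩ : Fin (Module.finrank ℝ V)) = j := rfl
    rw [h4] at h3
    rw [← h3, OrthonormalBasis.equiv_symm, OrthonormalBasis.equiv_apply_basis]
    exact hcW n _ hj
end

section
/- Let L and L′ be nonempty compact convex subsets of ℝ³ of dimension 1 (i.e. their linear spans are 1-dimensional) with 0 ∈ L and 0 ∈ L′, and let ε ∈ (0,1) be such that (1−ε)•L ⊆ L′ ⊆ (1+ε)•L and (1−ε)•L′ ⊆ L ⊆ (1+ε)•L′. Then the Gromov–Hausdorff distance between the metric spaces L and L′ (each endowed with the metric induced from the Euclidean distance of ℝ³) is at most 2·(diam(L) + diam(L′))·ε. -/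
open Pointwise

/-- Let `L, L'` be nonempty compact convex 1-dimensional subsets of `ℝ³`
containing `0`, and let `ε ∈ (0,1)` with `(1−ε)•L ⊆ L' ⊆ (1+ε)•L` and
`(1−ε)•L' ⊆ L ⊆ (1+ε)•L'`. Then the Gromov–Hausdorff distance between `L` and `L'` (with their
induced Euclidean metrics) is at most `2·(diam L + diam L')·ε`. -/
theorem stmt_10 (L L' : Set (EuclideanSpace ℝ (Fin 3)))
    (hLc : IsCompact L) (hLconv : Convex ℝ L) (hLne : L.Nonempty)
    (hL'c : IsCompact L') (hL'conv : Convex ℝ L') (hL'ne : L'.Nonempty)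
    (hLdim : Module.finrank ℝ (Submodule.span ℝ L) = 1)
    (hL'dim : Module.finrank ℝ (Submodule.span ℝ L') = 1)
    (h0L : (0 : EuclideanSpace ℝ (Fin 3)) ∈ L)
    (h0L' : (0 : EuclideanSpace ℝ (Fin 3)) ∈ L')
    (ε : ℝ) (hε : ε ∈ Set.Ioo (0:ℝ) 1)
    (h₁ : (1 - ε) • L ⊆ L') (h₂ : L' ⊆ (1 + ε) • L)
    (h₃ : (1 - ε) • L' ⊆ L) (h₄ : L ⊆ (1 + ε) • L') :
    haveI : Nonempty L := hLne.to_subtype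
    haveI : Nonempty L' := hL'ne.to_subtype
    haveI : CompactSpace L := isCompact_iff_compactSpace.mp hLc
    haveI : CompactSpace L' := isCompact_iff_compactSpace.mp hL'c
    GromovHausdorff.ghDist L L' ≤ 2 * (Metric.diam L + Metric.diam L') * ε := by
  have : Nonempty L := hLne.to_subtype
  have : Nonempty L' := hL'ne.to_subtype
  have : CompactSpace L := isCompact_iff_compactSpace.mp hLc
  have : CompactSpace L' := isCompact_iff_compactSpace.mp hL'c
  have hd : 0 ≤ Metric.diam L := Metric.diam_nonneg
  have hd' : 0 ≤ Metric.diam L' := Metric.diam_nonneg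
  have key : ∀ (A B : Set (EuclideanSpace ℝ (Fin 3))), IsCompact A → 0 ∈ A →
      (1 - ε) • A ⊆ B → ∀ x ∈ A, ∃ y ∈ B, dist x y ≤ Metric.diam A * ε := by
    intro A B hA h0 hAB x hx
    refine ⟨(1 - ε) • x, hAB (Set.smul_mem_smul_set hx), ?_⟩
    have h1 : dist x 0 ≤ Metric.diam A := Metric.dist_le_diam_of_mem hA.isBounded hx h0
    rw [dist_zero_right] at h1
    have h2 : x - (1 - ε) • x = ε • x := by
      rw [sub_smul, one_smul, sub_sub_cancel]
    rw [dist_eq_norm, h2, norm_smul, Real.norm_of_nonneg hε.1.le, mul_comm]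
    exact mul_le_mul_of_nonneg_right h1 hε.1.le
  have hGH := GromovHausdorff.ghDist_le_hausdorffDist (X := L) (Y := L')
    (isometry_subtype_coe) (isometry_subtype_coe)
  rw [Subtype.range_coe, Subtype.range_coe] at hGH
  refine hGH.trans (Metric.hausdorffDist_le_of_mem_dist ?_ ?_ ?_)
  · exact mul_nonneg (by positivity) hε.1.le
  · intro x hx
    obtain ⟨y, hy, h⟩ := key L L' hLc h0L h₁ x hx
    exact ⟨y, hy, h.trans (mul_le_mul_of_nonneg_right (by linarith) hε.1.le)⟩
  · intro x hx
    obtain ⟨y, hy, h⟩ := key L' L hL'c h0L' h₃ x hx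
    exact ⟨y, hy, h.trans (mul_le_mul_of_nonneg_right (by linarith) hε.1.le)⟩
end
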